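/- Let ψ_x: 𝒳 → 𝒰 and ψ_y: 𝒴 → 𝒱 be functions between finite sets, set U = ψ_x(X) and V = ψ_y(Y), take reconstruction alphabets 𝒳̂ = 𝒰 and 𝒴̂ = 𝒱, and let δ1(x,û) = 0 if û = ψ_x(x) and 1 otherwise, and δ2(y,v̂) = 0 if v̂ = ψ_y(y) and 1 otherwise. Then R(0,0) = max{ H(U|Y), H(V|X) }. -/

import Mathlib

open scoped BigOperators Classical

noncomputable section

namespace TWR

/-- Base-2 Shannon entropy of a finitely supported distribution (with the
convention `0 * log 0 = 0`, automatic since `Real.logb 2 0 = 0`). -/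
def H2 {α : Type} [Fintype α] (p : α → ℝ) : ℝ :=
  -∑ a, p a * Real.logb 2 (p a)

/-- `p` is a probability mass function. -/
def IsPmf {α : Type} [Fintype α] (p : α → ℝ) : Prop :=
  (∀ a, 0 ≤ p a) ∧ ∑ a, p a = 1

/-- `W` is a conditional pmf. -/
def IsCondPmf {α β : Type} [Fintype β] (W : α → β → ℝ) : Prop :=
  ∀ a, IsPmf (W a)

/-- Mutual information `I(A;B)` (base 2) of a joint pmf on `α × β`. -/
def MI {α β : Type} [Fintype α] [Fintype β] (p : α × β → ℝ) : ℝ :=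
  H2 (fun a => ∑ b, p (a, b)) + H2 (fun b => ∑ a, p (a, b)) - H2 p

/-- Conditional entropy `H(A|B)` of a joint pmf on `α × β`. -/
def condH {α β : Type} [Fintype α] [Fintype β] (p : α × β → ℝ) : ℝ :=
  H2 p - H2 (fun b => ∑ a, p (a, b))

/-- Conditional mutual information `I(A;C|B)` of a joint pmf on `α × β × γ`,
conditioning on the middle coordinate (`I(A;C|B) = H(A,B)+H(B,C)-H(A,B,C)-H(B)`). -/
def condMI {α β γ : Type} [Fintype α] [Fintype β] [Fintype γ] (p : α × β × γ → ℝ) : ℝ :=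
  H2 (fun ab : α × β => ∑ c, p (ab.1, ab.2, c)) +
    H2 (fun bc : β × γ => ∑ a, p (a, bc.1, bc.2)) -
    H2 p - H2 (fun b : β => ∑ a, ∑ c, p (a, b, c))

/-- Markov chain `A − B − C` for a joint pmf on `α × β × γ`. -/
def Markov {α β γ : Type} [Fintype α] [Fintype β] [Fintype γ] (p : α × β × γ → ℝ) : Prop :=
  ∀ a b c, p (a, b, c) * (∑ a', ∑ c', p (a', b, c')) =
    (∑ c', p (a, b, c')) * (∑ a', p (a', b, c))

variable {𝒳 𝒴 Xh Yh 𝒲 𝒰 𝒱 : Type}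
variable [Fintype 𝒳] [Fintype 𝒴] [Fintype Xh] [Fintype Yh]
variable [Fintype 𝒲] [Fintype 𝒰] [Fintype 𝒱]

/-- The i.i.d. block source. -/
def iid (q : 𝒳 × 𝒴 → ℝ) (n : ℕ) : (Fin n → 𝒳) × (Fin n → 𝒴) → ℝ :=
  fun xy => ∏ i, q (xy.1 i, xy.2 i)

/-- Average distortion at receiver 1 of the RD code `(f, g1, ·)`. -/
def Delta1 (q : 𝒳 × 𝒴 → ℝ) (δ1 : 𝒳 → Xh → ℝ) {n m : ℕ}
    (f : (Fin n → 𝒳) × (Fin n → 𝒴) → Fin m)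
    (g1 : Fin m × (Fin n → 𝒴) → Fin n → Xh) : ℝ :=
  ∑ xy : (Fin n → 𝒳) × (Fin n → 𝒴),
    iid q n xy * ((n : ℝ)⁻¹ * ∑ i, δ1 (xy.1 i) (g1 (f xy, xy.2) i))

/-- Average distortion at receiver 2 of the RD code `(f, ·, g2)`. -/
def Delta2 (q : 𝒳 × 𝒴 → ℝ) (δ2 : 𝒴 → Yh → ℝ) {n m : ℕ}
    (f : (Fin n → 𝒳) × (Fin n → 𝒴) → Fin m)
    (g2 : Fin m × (Fin n → 𝒳) → Fin n → Yh) : ℝ :=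
  ∑ xy : (Fin n → 𝒳) × (Fin n → 𝒴),
    iid q n xy * ((n : ℝ)⁻¹ * ∑ i, δ2 (xy.2 i) (g2 (f xy, xy.1) i))

/-- `r` is a `(d1,d2)`-achievable rate (source coding). -/
def RDAchievable (q : 𝒳 × 𝒴 → ℝ) (δ1 : 𝒳 → Xh → ℝ) (δ2 : 𝒴 → Yh → ℝ)
    (d1 d2 r : ℝ) : Prop :=
  ∀ ε > (0 : ℝ), ∃ (n m : ℕ) (f : (Fin n → 𝒳) × (Fin n → 𝒴) → Fin m)
    (g1 : Fin m × (Fin n → 𝒴) → Fin n → Xh)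
    (g2 : Fin m × (Fin n → 𝒳) → Fin n → Yh),
    0 < n ∧ Real.logb 2 m / n ≤ r + ε ∧
    Delta1 q δ1 f g1 ≤ d1 + ε ∧ Delta2 q δ2 f g2 ≤ d2 + ε

/-- The rate-distortion function `R(d1,d2)`. -/
def RD (q : 𝒳 × 𝒴 → ℝ) (δ1 : 𝒳 → Xh → ℝ) (δ2 : 𝒴 → Yh → ℝ) (d1 d2 : ℝ) : ℝ :=
  sInf {r : ℝ | 0 ≤ r ∧ RDAchievable q δ1 δ2 d1 d2 r}

/-- `r` is `(d1,d2)`-achievable with common reconstructions. -/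
def CRAchievable (q : 𝒳 × 𝒴 → ℝ) (δ1 : 𝒳 → Xh → ℝ) (δ2 : 𝒴 → Yh → ℝ)
    (d1 d2 r : ℝ) : Prop :=
  ∀ ε > (0 : ℝ), ∃ (n m : ℕ) (f : (Fin n → 𝒳) × (Fin n → 𝒴) → Fin m)
    (g1 : Fin m × (Fin n → 𝒴) → Fin n → Xh)
    (g2 : Fin m × (Fin n → 𝒳) → Fin n → Yh)
    (φ1 : Fin m × (Fin n → 𝒴) → Fin n → Yh)
    (φ2 : Fin m × (Fin n → 𝒳) → Fin n → Xh),
    0 < n ∧ Real.logb 2 m / n ≤ r + ε ∧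
    Delta1 q δ1 f g1 ≤ d1 + ε ∧ Delta2 q δ2 f g2 ≤ d2 + ε ∧
    (∑ xy : (Fin n → 𝒳) × (Fin n → 𝒴),
      if φ2 (f xy, xy.1) = g1 (f xy, xy.2) then 0 else iid q n xy) ≤ ε ∧
    (∑ xy : (Fin n → 𝒳) × (Fin n → 𝒴),
      if φ1 (f xy, xy.2) = g2 (f xy, xy.1) then 0 else iid q n xy) ≤ ε

/-- The common-reconstruction rate-distortion function `R_CR(d1,d2)`. -/
def CRRD (q : 𝒳 × 𝒴 → ℝ) (δ1 : 𝒳 → Xh → ℝ) (δ2 : 𝒴 → Yh → ℝ) (d1 d2 : ℝ) : ℝ :=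
  sInf {r : ℝ | 0 ≤ r ∧ CRAchievable q δ1 δ2 d1 d2 r}

/-- The conditional rate-distortion function `R_{X|Y}(d1)`. -/
def condRD (q : 𝒳 × 𝒴 → ℝ) (δ1 : 𝒳 → Xh → ℝ) (d1 : ℝ) : ℝ :=
  sInf {r : ℝ | ∃ W : 𝒳 × 𝒴 → Xh → ℝ, IsCondPmf W ∧
    (∑ x, ∑ y, ∑ xh, q (x, y) * W (x, y) xh * δ1 x xh) ≤ d1 ∧
    r = condMI (fun t : 𝒳 × 𝒴 × Xh => q (t.1, t.2.1) * W (t.1, t.2.1) t.2.2)}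

/-- Swap the two components of a joint source. -/
def swap (q : 𝒳 × 𝒴 → ℝ) : 𝒴 × 𝒳 → ℝ := fun t => q (t.2, t.1)

/-- The marginal rate-distortion function `R_X(d)`. -/
def margRD (qX : 𝒳 → ℝ) (δ1 : 𝒳 → Xh → ℝ) (d1 : ℝ) : ℝ :=
  sInf {r : ℝ | ∃ W : 𝒳 → Xh → ℝ, IsCondPmf W ∧
    (∑ x, ∑ xh, qX x * W x xh * δ1 x xh) ≤ d1 ∧
    r = MI (fun t : 𝒳 × Xh => qX t.1 * W t.1 t.2)}

def margX (q : 𝒳 × 𝒴 → ℝ) : 𝒳 → ℝ := fun x => ∑ y, q (x, y)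
def margY (q : 𝒳 × 𝒴 → ℝ) : 𝒴 → ℝ := fun y => ∑ x, q (x, y)

/-- The joint rate-distortion function `R_{XY}(d1,d2)`. -/
def jointRD (q : 𝒳 × 𝒴 → ℝ) (δ1 : 𝒳 → Xh → ℝ) (δ2 : 𝒴 → Yh → ℝ) (d1 d2 : ℝ) : ℝ :=
  sInf {r : ℝ | ∃ W : 𝒳 × 𝒴 → Xh × Yh → ℝ, IsCondPmf W ∧
    (∑ xy : 𝒳 × 𝒴, ∑ z : Xh × Yh, q xy * W xy z * δ1 xy.1 z.1) ≤ d1 ∧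
    (∑ xy : 𝒳 × 𝒴, ∑ z : Xh × Yh, q xy * W xy z * δ2 xy.2 z.2) ≤ d2 ∧
    r = MI (fun t : (𝒳 × 𝒴) × (Xh × Yh) => q t.1 * W t.1 t.2)}

/-- The Wyner–Ziv rate-distortion function `R^{WZ}_{X|Y}(d1)`
(with auxiliary alphabet of cardinality `|𝒳| + 1`). -/
def wzRD (q : 𝒳 × 𝒴 → ℝ) (δ1 : 𝒳 → Xh → ℝ) (d1 : ℝ) : ℝ :=
  sInf {r : ℝ | ∃ p : Fin (Fintype.card 𝒳 + 1) × 𝒳 × 𝒴 → ℝ, IsPmf p ∧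
    (∀ x y, (∑ a, p (a, x, y)) = q (x, y)) ∧ Markov p ∧
    (∃ π1 : Fin (Fintype.card 𝒳 + 1) × 𝒴 → Xh,
      (∑ a, ∑ x, ∑ y, p (a, x, y) * δ1 x (π1 (a, y))) ≤ d1) ∧
    r = condMI (fun t : 𝒳 × 𝒴 × Fin (Fintype.card 𝒳 + 1) => p (t.2.2, t.1, t.2.1))}

/-- The set over which the single-letter CR formula
`max{I(X;X̂,Ŷ|Y), I(Y;X̂,Ŷ|X)}` is minimised. -/
def crFormulaSet (q : 𝒳 × 𝒴 → ℝ) (δ1 : 𝒳 → Xh → ℝ) (δ2 : 𝒴 → Yh → ℝ)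
    (d1 d2 : ℝ) : Set ℝ :=
  {r : ℝ | ∃ W : 𝒳 × 𝒴 → Xh × Yh → ℝ, IsCondPmf W ∧
    (∑ x, ∑ y, ∑ z : Xh × Yh, q (x, y) * W (x, y) z * δ1 x z.1) ≤ d1 ∧
    (∑ x, ∑ y, ∑ z : Xh × Yh, q (x, y) * W (x, y) z * δ2 y z.2) ≤ d2 ∧
    r = max
      (condMI (fun t : 𝒳 × 𝒴 × (Xh × Yh) => q (t.1, t.2.1) * W (t.1, t.2.1) t.2.2))
      (condMI (fun t : 𝒴 × 𝒳 × (Xh × Yh) => q (t.2.1, t.1) * W (t.2.1, t.1) t.2.2))}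

/-- Joint law of source blocks and channel outputs for a JSC encoder. -/
def jscP (q : 𝒳 × 𝒴 → ℝ) (qUV : 𝒲 → 𝒰 × 𝒱 → ℝ) {n m : ℕ}
    (f : (Fin n → 𝒳) × (Fin n → 𝒴) → Fin m → 𝒲)
    (x : Fin n → 𝒳) (y : Fin n → 𝒴) (u : Fin m → 𝒰) (v : Fin m → 𝒱) : ℝ :=
  (∏ i, q (x i, y i)) * ∏ j, qUV (f (x, y) j) (u j, v j)

/-- `(d1,d2)` is achievable by joint source-channel coding with source rate `κs`
and channel rate `κc` (bandwidth expansion `κc/κs`). -/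
def JSCAchievable (q : 𝒳 × 𝒴 → ℝ) (qUV : 𝒲 → 𝒰 × 𝒱 → ℝ)
    (δ1 : 𝒳 → Xh → ℝ) (δ2 : 𝒴 → Yh → ℝ) (κs κc d1 d2 : ℝ) : Prop :=
  ∀ ε > (0 : ℝ), ∃ (t n m : ℕ) (f : (Fin n → 𝒳) × (Fin n → 𝒴) → Fin m → 𝒲)
    (g1 : (Fin m → 𝒰) × (Fin n → 𝒴) → Fin n → Xh)
    (g2 : (Fin m → 𝒱) × (Fin n → 𝒳) → Fin n → Yh),
    0 < t ∧ (n : ℝ) = κs * t ∧ (m : ℝ) = κc * t ∧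
    (∑ x : Fin n → 𝒳, ∑ y : Fin n → 𝒴, ∑ u : Fin m → 𝒰, ∑ v : Fin m → 𝒱,
      jscP q qUV f x y u v * ((n : ℝ)⁻¹ * ∑ i, δ1 (x i) (g1 (u, y) i))) ≤ d1 + ε ∧
    (∑ x : Fin n → 𝒳, ∑ y : Fin n → 𝒴, ∑ u : Fin m → 𝒰, ∑ v : Fin m → 𝒱,
      jscP q qUV f x y u v * ((n : ℝ)⁻¹ * ∑ i, δ2 (y i) (g2 (v, x) i))) ≤ d2 + ε

/-- `(d1,d2)` is achievable by joint source-channel coding with common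
reconstructions, source rate `κs` and channel rate `κc`. -/
def CRJSCAchievable (q : 𝒳 × 𝒴 → ℝ) (qUV : 𝒲 → 𝒰 × 𝒱 → ℝ)
    (δ1 : 𝒳 → Xh → ℝ) (δ2 : 𝒴 → Yh → ℝ) (κs κc d1 d2 : ℝ) : Prop :=
  ∀ ε > (0 : ℝ), ∃ (t n m : ℕ) (f : (Fin n → 𝒳) × (Fin n → 𝒴) → Fin m → 𝒲)
    (g1 : (Fin m → 𝒰) × (Fin n → 𝒴) → Fin n → Xh)
    (g2 : (Fin m → 𝒱) × (Fin n → 𝒳) → Fin n → Yh)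
    (φ1 : (Fin m → 𝒰) × (Fin n → 𝒴) → Fin n → Yh)
    (φ2 : (Fin m → 𝒱) × (Fin n → 𝒳) → Fin n → Xh),
    0 < t ∧ (n : ℝ) = κs * t ∧ (m : ℝ) = κc * t ∧
    (∑ x : Fin n → 𝒳, ∑ y : Fin n → 𝒴, ∑ u : Fin m → 𝒰, ∑ v : Fin m → 𝒱,
      jscP q qUV f x y u v * ((n : ℝ)⁻¹ * ∑ i, δ1 (x i) (g1 (u, y) i))) ≤ d1 + ε ∧
    (∑ x : Fin n → 𝒳, ∑ y : Fin n → 𝒴, ∑ u : Fin m → 𝒰, ∑ v : Fin m → 𝒱,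
      jscP q qUV f x y u v * ((n : ℝ)⁻¹ * ∑ i, δ2 (y i) (g2 (v, x) i))) ≤ d2 + ε ∧
    (∑ x : Fin n → 𝒳, ∑ y : Fin n → 𝒴, ∑ u : Fin m → 𝒰, ∑ v : Fin m → 𝒱,
      if φ2 (v, x) = g1 (u, y) then 0 else jscP q qUV f x y u v) ≤ ε ∧
    (∑ x : Fin n → 𝒳, ∑ y : Fin n → 𝒴, ∑ u : Fin m → 𝒰, ∑ v : Fin m → 𝒱,
      if φ1 (u, y) = g2 (v, x) then 0 else jscP q qUV f x y u v) ≤ ε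

/-- `I(W;U)` under the joint law `pW · qUV` (U-marginal of the broadcast channel). -/
def chMIU (qUV : 𝒲 → 𝒰 × 𝒱 → ℝ) (pW : 𝒲 → ℝ) : ℝ :=
  MI (fun t : 𝒲 × 𝒰 => pW t.1 * ∑ v, qUV t.1 (t.2, v))

/-- `I(W;V)` under the joint law `pW · qUV` (V-marginal of the broadcast channel). -/
def chMIV (qUV : 𝒲 → 𝒰 × 𝒱 → ℝ) (pW : 𝒲 → ℝ) : ℝ :=
  MI (fun t : 𝒲 × 𝒱 => pW t.1 * ∑ u, qUV t.1 (u, t.2))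

/-- The doubly symmetric binary source with crossover probability `ρ`. -/
def dsbs (ρ : ℝ) : Bool × Bool → ℝ :=
  fun t => if t.1 = t.2 then (1 - ρ) / 2 else ρ / 2

/-- The Hamming distortion measure. -/
def dHam {α : Type} : α → α → ℝ := fun a b => if a = b then 0 else 1

/-- The binary entropy function (base 2). -/
def binEnt (x : ℝ) : ℝ := -(x * Real.logb 2 x) - (1 - x) * Real.logb 2 (1 - x)

/-- A difference distortion measure built from a per-letter function of the
(modular) difference. -/
def diffD {l : ℕ} (δ : Fin l → ℝ) : Fin l → Fin l → ℝ := fun a b => δ (a - b)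

/-- Capacity of the modulo-additive channel with noise `pN` and input
distortion constraint `d`. -/
def Cadd {l : ℕ} (δ : Fin l → ℝ) (d : ℝ) (pN : Fin l → ℝ) : ℝ :=
  sSup {r : ℝ | ∃ pW : Fin l → ℝ, IsPmf pW ∧ (∑ w, pW w * δ w) ≤ d ∧
    r = MI (fun t : Fin l × Fin l => pW t.1 * pN (t.2 - t.1))}

/-- The minimax (worst-noise) capacity under distortion constraint `d`. -/
def Cworst {l : ℕ} (δ : Fin l → ℝ) (d : ℝ) : ℝ :=
  sInf {r : ℝ | ∃ pN : Fin l → ℝ, IsPmf pN ∧ (∑ x, pN x * δ x) ≤ d ∧ r = Cadd δ d pN}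

/-- Wyner's common information `K(X;Y)` (auxiliary alphabet of size 4). -/
def wynerK (q : 𝒳 × 𝒴 → ℝ) : ℝ :=
  sInf {r : ℝ | ∃ W : 𝒳 × 𝒴 → Fin 4 → ℝ, IsCondPmf W ∧
    Markov (fun t : 𝒳 × Fin 4 × 𝒴 => q (t.1, t.2.2) * W (t.1, t.2.2) t.2.1) ∧
    r = MI (fun t : (𝒳 × 𝒴) × Fin 4 => q t.1 * W t.1 t.2)}

/-- The one-description (Kimura–Uyematsu) upper bound `R_U*(d1,d2)`. -/
def oneDescUB (q : 𝒳 × 𝒴 → ℝ) (δ1 : 𝒳 → Xh → ℝ) (δ2 : 𝒴 → Yh → ℝ) (d1 d2 : ℝ) : ℝ :=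
  sInf {r : ℝ | ∃ W : 𝒳 × 𝒴 → Fin (Fintype.card 𝒳 * Fintype.card 𝒴 + 2) → ℝ,
    IsCondPmf W ∧
    (∃ π1 : Fin (Fintype.card 𝒳 * Fintype.card 𝒴 + 2) × 𝒴 → Xh,
      (∑ x, ∑ y, ∑ c, q (x, y) * W (x, y) c * δ1 x (π1 (c, y))) ≤ d1) ∧
    (∃ π2 : Fin (Fintype.card 𝒳 * Fintype.card 𝒴 + 2) × 𝒳 → Yh,
      (∑ x, ∑ y, ∑ c, q (x, y) * W (x, y) c * δ2 y (π2 (c, x))) ≤ d2) ∧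
    r = max
      (condMI (fun t : 𝒳 × 𝒴 × Fin (Fintype.card 𝒳 * Fintype.card 𝒴 + 2) =>
        q (t.1, t.2.1) * W (t.1, t.2.1) t.2.2))
      (condMI (fun t : 𝒴 × 𝒳 × Fin (Fintype.card 𝒳 * Fintype.card 𝒴 + 2) =>
        q (t.2.1, t.1) * W (t.2.1, t.1) t.2.2))}

end TWR

/-!
Converse for receiver 1. Given a code with `m` messages, consider the likelihood ratio between a
test distribution for `Uⁿ`, namely a noisy copy of the decoder output, and the conditional law of
`Uⁿ` given `Yⁿ`. For each fixed message it has mean at most `1`, so its mean is at most `m`, and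
Gibbs' inequality turns this into `n H(U|Y) ≤ log m + o(n)` as the symbol error rate vanishes.

Achievability. The encoder knows both targets and sends one bin index of the *pair* `(Uⁿ, Vⁿ)`.
Receiver 1 computes `Vⁿ` from its side information, so it only has to find `Uⁿ` in a list of at
most `2 ^ (n K)` conditionally typical blocks, where `K > H(U|Y)`; receiver 2 is symmetric. Hence
the same index of `n R` bits serves both receivers as soon as `R` exceeds both entropies.
-/

namespace TWR

open Filter Topology MeasureTheory ProbabilityTheory

section FiniteProbability

variable {α β : Type*} [Fintype α] [Fintype β]

/-- The probability `∑_{a ∈ s} p a` of an event `s` under the mass function `p`. -/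
def prob (p : α → ℝ) (s : Set α) : ℝ :=
  ∑ a with a ∈ s, p a

lemma prob_eq_sum_mul_indicator (p : α → ℝ) (s : Set α) :
    prob p s = ∑ a, p a * s.indicator 1 a := by
  simp [prob, Finset.sum_filter, Set.indicator_apply]

lemma prob_mono_of_ne_zero {p : α → ℝ} (hp : ∀ a, 0 ≤ p a) {s t : Set α}
    (hst : ∀ a, p a ≠ 0 → a ∈ s → a ∈ t) : prob p s ≤ prob p t := by
  simp only [prob, Finset.sum_filter]
  refine Finset.sum_le_sum fun a _ => ?_
  split_ifs with hs ht ht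
  · exact le_rfl
  · exact (not_not.1 fun ha => ht (hst a ha hs)).le
  · exact hp a
  · exact le_rfl

lemma prob_mono {p : α → ℝ} (hp : ∀ a, 0 ≤ p a) {s t : Set α} (hst : s ⊆ t) :
    prob p s ≤ prob p t :=
  prob_mono_of_ne_zero hp fun _ _ ha => hst ha

lemma prob_nonneg {p : α → ℝ} (hp : ∀ a, 0 ≤ p a) (s : Set α) : 0 ≤ prob p s :=
  Finset.sum_nonneg fun _ _ => hp _

lemma prob_union_le {p : α → ℝ} (hp : ∀ a, 0 ≤ p a) (s t : Set α) :
    prob p (s ∪ t) ≤ prob p s + prob p t := by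
  have hunion : prob p (s ∪ t) + prob p (s ∩ t) = prob p s + prob p t := by
    simp only [prob, Set.mem_union, Set.mem_inter_iff, Finset.filter_or, Finset.filter_and]
    exact Finset.sum_union_inter
  linarith [prob_nonneg hp (s ∩ t)]

lemma prob_comp_equiv (e : α ≃ β) (p : β → ℝ) (s : Set β) :
    prob (fun a => p (e a)) (e ⁻¹' s) = prob p s := by
  simp only [prob, Finset.sum_filter, Set.mem_preimage]
  exact e.sum_comp fun b => if b ∈ s then p b else 0

end FiniteProbability

namespace IsPmf

variable {α : Type} [Fintype α] {p : α → ℝ}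

lemma nonempty (hp : IsPmf p) : Nonempty α := by
  by_contra hα
  have := not_nonempty_iff.1 hα
  simpa using hp.2

lemma prod (hp : IsPmf p) (n : ℕ) : IsPmf fun ω : Fin n → α => ∏ i, p (ω i) :=
  ⟨fun _ => Finset.prod_nonneg fun _ _ => hp.1 _, by
    rw [← Fintype.prod_sum fun (_ : Fin n) a => p a]; simp [hp.2]⟩

/-- The Mathlib probability mass function with real values `p`, through which the moment
inequalities of measure theory apply to finite sums. -/
def toPMF (hp : IsPmf p) : PMF α :=
  PMF.ofFintype (fun a => ENNReal.ofReal (p a)) <| by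
    rw [← ENNReal.ofReal_sum_of_nonneg fun a _ => hp.1 a, hp.2, ENNReal.ofReal_one]

variable [MeasurableSpace α] [MeasurableSingletonClass α]

lemma measureReal_toPMF_singleton (hp : IsPmf p) (a : α) :
    hp.toPMF.toMeasure.real {a} = p a := by
  rw [measureReal_def, PMF.toMeasure_apply_singleton _ _ (measurableSet_singleton a)]
  exact ENNReal.toReal_ofReal (hp.1 a)

lemma integral_toPMF (hp : IsPmf p) (z : α → ℝ) :
    ∫ a, z a ∂hp.toPMF.toMeasure = ∑ a, p a * z a := by
  simp [integral_fintype .of_finite, hp.measureReal_toPMF_singleton]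

lemma integral_pi_toPMF (hp : IsPmf p) {n : ℕ} (F : (Fin n → α) → ℝ) :
    ∫ ω, F ω ∂Measure.pi (fun _ : Fin n => hp.toPMF.toMeasure) =
      ∑ ω, (∏ i, p (ω i)) * F ω := by
  have hsingleton (ω : Fin n → α) :
      (Measure.pi fun _ : Fin n => hp.toPMF.toMeasure).real {ω} = ∏ i, p (ω i) := by
    rw [measureReal_def, Measure.pi_singleton, ENNReal.toReal_prod]
    exact Finset.prod_congr rfl fun i _ => hp.measureReal_toPMF_singleton (ω i)
  simp [integral_fintype .of_finite, hsingleton]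

end IsPmf

section LawOfLargeNumbers

variable {α : Type} [Fintype α] {p : α → ℝ}

lemma sum_prod_mul_sum_apply (hp : IsPmf p) (z : α → ℝ) (n : ℕ) :
    ∑ ω : Fin n → α, (∏ i, p (ω i)) * ∑ i, z (ω i) = n * ∑ a, p a * z a := by
  let _ : MeasurableSpace α := ⊤
  rw [← hp.integral_pi_toPMF, integral_finsetSum _ fun _ _ => .of_finite]
  simp [integral_comp_eval (X := fun _ : Fin n => α) (f := z) .of_discrete, hp.integral_toPMF]

lemma prob_prod_lt_sum_le_variance_div (hp : IsPmf p) (z : α → ℝ) {c : ℝ}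
    (hc : ∑ a, p a * z a < c) {n : ℕ} (hn : 0 < n) :
    prob (fun ω : Fin n → α => ∏ i, p (ω i)) {ω | n * c < ∑ i, z (ω i)} ≤
      Var[z; @PMF.toMeasure α ⊤ hp.toPMF] / (c - ∑ a, p a * z a) ^ 2 / n := by
  let _ : MeasurableSpace α := ⊤
  set δ := c - ∑ a, p a * z a
  have hnδ : 0 < n * δ := mul_pos (mod_cast hn) (sub_pos.2 hc)
  set μ := Measure.pi fun _ : Fin n => hp.toPMF.toMeasure
  set S : (Fin n → α) → ℝ := ∑ i, fun ω => z (ω i)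
  have hmean : μ[S] = n * ∑ a, p a * z a := by
    rw [hp.integral_pi_toPMF, ← sum_prod_mul_sum_apply hp]
    simp [S]
  have hvar : Var[S; μ] = n * Var[z; hp.toPMF.toMeasure] := by
    simp [S, μ, variance_sum_pi fun _ : Fin n => MemLp.of_discrete (f := z)]
  calc prob (fun ω : Fin n → α => ∏ i, p (ω i)) {ω | n * c < ∑ i, z (ω i)}
      = μ.real {ω | n * c < ∑ i, z (ω i)} := by
        rw [prob_eq_sum_mul_indicator, ← hp.integral_pi_toPMF, integral_indicator_one .of_discrete]
    _ ≤ μ.real {ω | n * δ ≤ |S ω - μ[S]|} := by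
        refine measureReal_mono fun ω (hω : n * c < ∑ i, z (ω i)) => ?_
        have hdev : n * δ ≤ S ω - μ[S] := by
          simp only [S, δ, Finset.sum_apply] at hmean ⊢
          linarith
        exact hdev.trans (le_abs_self _)
    _ ≤ Var[S; μ] / (n * δ) ^ 2 :=
        ENNReal.toReal_le_of_le_ofReal (div_nonneg (variance_nonneg _ _) (sq_nonneg _))
          (meas_ge_le_variance_div_sq .of_discrete hnδ)
    _ = Var[z; hp.toPMF.toMeasure] / δ ^ 2 / n := by
        rw [hvar]
        field_simp

theorem tendsto_prob_prod_lt_sum (hp : IsPmf p) (z : α → ℝ) {c : ℝ}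
    (hc : ∑ a, p a * z a < c) :
    Tendsto (fun n : ℕ => prob (fun ω : Fin n → α => ∏ i, p (ω i)) {ω | n * c < ∑ i, z (ω i)})
      atTop (𝓝 0) :=
  squeeze_zero' (.of_forall fun n => prob_nonneg (hp.prod n).1 _)
    ((eventually_gt_atTop 0).mono fun _ hn => prob_prod_lt_sum_le_variance_div hp z hc hn)
    (tendsto_natCast_atTop_atTop.const_div_atTop _)

end LawOfLargeNumbers

section BlockSource

variable {𝒳 𝒴 : Type} {q : 𝒳 × 𝒴 → ℝ}

lemma iid_nonneg (hq : ∀ t, 0 ≤ q t) (n : ℕ) (xy : (Fin n → 𝒳) × (Fin n → 𝒴)) :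
    0 ≤ iid q n xy :=
  Finset.prod_nonneg fun _ _ => hq _

variable [Fintype 𝒳] [Fintype 𝒴]

lemma IsPmf.swap (hq : IsPmf q) : IsPmf (swap q) :=
  ⟨fun _ => hq.1 _, ((Equiv.prodComm 𝒴 𝒳).sum_comp q).trans hq.2⟩

lemma sum_iid_mul (q : 𝒳 × 𝒴 → ℝ) (n : ℕ) (F : (Fin n → 𝒳) × (Fin n → 𝒴) → ℝ) :
    ∑ xy, iid q n xy * F xy =
      ∑ ω : Fin n → 𝒳 × 𝒴, (∏ i, q (ω i)) * F (fun i => (ω i).1, fun i => (ω i).2) :=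
  ((Equiv.arrowProdEquivProdArrow (Fin n) (fun _ => 𝒳) (fun _ => 𝒴)).sum_comp
    fun xy => iid q n xy * F xy).symm

lemma IsPmf.iid (hq : IsPmf q) (n : ℕ) : IsPmf (iid q n) :=
  ⟨iid_nonneg hq.1 n, by simpa [(hq.prod n).2] using sum_iid_mul q n 1⟩

lemma sum_iid_mul_sum_apply (hq : IsPmf q) (z : 𝒳 × 𝒴 → ℝ) (n : ℕ) :
    ∑ xy, iid q n xy * ∑ i, z (xy.1 i, xy.2 i) = n * ∑ t, q t * z t := by
  rw [sum_iid_mul, ← sum_prod_mul_sum_apply hq]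

theorem tendsto_prob_iid_lt_sum (hq : IsPmf q) (z : 𝒳 × 𝒴 → ℝ) {c : ℝ}
    (hc : ∑ t, q t * z t < c) :
    Tendsto (fun n : ℕ => prob (iid q n) {xy | n * c < ∑ i, z (xy.1 i, xy.2 i)}) atTop (𝓝 0) := by
  refine (tendsto_prob_prod_lt_sum hq z hc).congr fun n => ?_
  exact prob_comp_equiv (Equiv.arrowProdEquivProdArrow (Fin n) (fun _ => 𝒳) (fun _ => 𝒴))
    (iid q n) {xy | n * c < ∑ i, z (xy.1 i, xy.2 i)}

lemma prob_iid_swap (q : 𝒳 × 𝒴 → ℝ) (n : ℕ) (s : Set ((Fin n → 𝒳) × (Fin n → 𝒴))) :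
    prob (iid (swap q) n) (Prod.swap ⁻¹' s) = prob (iid q n) s :=
  prob_comp_equiv (Equiv.prodComm _ _) (iid q n) s

lemma delta2_eq_delta1_swap {Yh : Type} (q : 𝒳 × 𝒴 → ℝ) (δ2 : 𝒴 → Yh → ℝ)
    {n m : ℕ} (f : (Fin n → 𝒳) × (Fin n → 𝒴) → Fin m) (g2 : Fin m × (Fin n → 𝒳) → Fin n → Yh) :
    Delta2 q δ2 f g2 = Delta1 (swap q) δ2 (f ∘ Prod.swap) g2 :=
  ((Equiv.prodComm (Fin n → 𝒴) (Fin n → 𝒳)).sum_comp fun xy =>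
    iid q n xy * ((n : ℝ)⁻¹ * ∑ i, δ2 (xy.2 i) (g2 (f xy, xy.1) i))).symm

end BlockSource

section ConditionalEntropy

variable {𝒰 𝒴 : Type} [Fintype 𝒰] {p : 𝒰 × 𝒴 → ℝ}

/-- The conditional mass function `p(u|y) = p(u,y) / p(y)`, equal to `0` where `p(y) = 0`. -/
def condPmf (p : 𝒰 × 𝒴 → ℝ) (t : 𝒰 × 𝒴) : ℝ :=
  p t / margY p t.2

lemma margY_nonneg (hp : ∀ t, 0 ≤ p t) (y : 𝒴) : 0 ≤ margY p y :=
  Finset.sum_nonneg fun _ _ => hp _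

lemma le_margY (hp : ∀ t, 0 ≤ p t) (t : 𝒰 × 𝒴) : p t ≤ margY p t.2 :=
  Finset.single_le_sum (f := fun u => p (u, t.2)) (fun _ _ => hp _) (Finset.mem_univ t.1)

lemma condPmf_nonneg (hp : ∀ t, 0 ≤ p t) (t : 𝒰 × 𝒴) : 0 ≤ condPmf p t :=
  div_nonneg (hp t) (margY_nonneg hp _)

lemma condPmf_le_one (hp : ∀ t, 0 ≤ p t) (t : 𝒰 × 𝒴) : condPmf p t ≤ 1 :=
  div_le_one_of_le₀ (le_margY hp t) (margY_nonneg hp _)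

lemma condPmf_pos (hp : ∀ t, 0 ≤ p t) {t : 𝒰 × 𝒴} (ht : 0 < p t) : 0 < condPmf p t :=
  div_pos ht (ht.trans_le (le_margY hp t))

lemma sum_condPmf_le_one (p : 𝒰 × 𝒴 → ℝ) (y : 𝒴) : ∑ u, condPmf p (u, y) ≤ 1 := by
  simp only [condPmf, ← Finset.sum_div]
  exact div_self_le_one (margY p y)

lemma sum_mul_div_condPmf_le (hp : ∀ t, 0 ≤ p t) {w : 𝒰 → ℝ} (hw : ∀ u, 0 ≤ w u) (y : 𝒴) :
    ∑ u, p (u, y) * (w u / condPmf p (u, y)) ≤ margY p y * ∑ u, w u := by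
  rw [Finset.mul_sum]
  refine Finset.sum_le_sum fun u _ => ?_
  rcases (hp (u, y)).eq_or_lt with hu | hu
  · rw [← hu, zero_mul]
    exact mul_nonneg (margY_nonneg hp y) (hw u)
  · rw [condPmf, div_div_eq_mul_div, mul_div_cancel₀ _ hu.ne', mul_comm]

variable [Fintype 𝒴]

lemma condH_eq_sum (hp : ∀ t, 0 ≤ p t) :
    condH p = ∑ t, p t * -Real.logb 2 (condPmf p t) := by
  have hmarg : ∑ y, margY p y * Real.logb 2 (margY p y) =
      ∑ t : 𝒰 × 𝒴, p t * Real.logb 2 (margY p t.2) := by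
    simp only [Fintype.sum_prod_type_right, ← Finset.sum_mul, margY]
  have hlog (t : 𝒰 × 𝒴) : p t * -Real.logb 2 (condPmf p t) =
      p t * Real.logb 2 (margY p t.2) - p t * Real.logb 2 (p t) := by
    rcases (hp t).eq_or_lt with ht | ht
    · simp only [← ht, zero_mul, sub_zero]
    · rw [condPmf, Real.logb_div ht.ne' (ht.trans_le (le_margY hp t)).ne']
      ring
  rw [Finset.sum_congr rfl fun t _ => hlog t, Finset.sum_sub_distrib, ← hmarg, condH, H2, H2,
    sub_neg_eq_add, neg_add_eq_sub]
  rfl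

lemma condH_nonneg (hp : ∀ t, 0 ≤ p t) : 0 ≤ condH p := by
  rw [condH_eq_sum hp]
  exact Finset.sum_nonneg fun t _ => mul_nonneg (hp t) <| neg_nonneg.2 <|
    Real.logb_nonpos one_lt_two (condPmf_nonneg hp t) (condPmf_le_one hp t)

end ConditionalEntropy

section MapFst

variable {𝒳 𝒴 𝒰 : Type} [Fintype 𝒳] {q : 𝒳 × 𝒴 → ℝ}

/-- The joint law of `(ψ X, Y)` when `(X, Y)` has law `q`. -/
def mapFst (ψ : 𝒳 → 𝒰) (q : 𝒳 × 𝒴 → ℝ) : 𝒰 × 𝒴 → ℝ :=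
  fun t => ∑ x, if ψ x = t.1 then q (x, t.2) else 0

lemma mapFst_nonneg (hq : ∀ t, 0 ≤ q t) (ψ : 𝒳 → 𝒰) (t : 𝒰 × 𝒴) : 0 ≤ mapFst ψ q t :=
  Finset.sum_nonneg fun x _ => by split_ifs <;> simp [hq]

lemma le_mapFst (hq : ∀ t, 0 ≤ q t) (ψ : 𝒳 → 𝒰) (t : 𝒳 × 𝒴) :
    q t ≤ mapFst ψ q (ψ t.1, t.2) := by
  simp only [mapFst, ← Finset.sum_filter]
  exact Finset.single_le_sum (f := fun x => q (x, t.2)) (fun _ _ => hq _)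
    (Finset.mem_filter.2 ⟨Finset.mem_univ t.1, rfl⟩)

variable [Fintype 𝒰]

lemma sum_mapFst_mul (ψ : 𝒳 → 𝒰) (q : 𝒳 × 𝒴 → ℝ) (F : 𝒰 → ℝ) (y : 𝒴) :
    ∑ u, mapFst ψ q (u, y) * F u = ∑ x, q (x, y) * F (ψ x) := by
  simp only [mapFst, Finset.sum_mul, ite_mul, zero_mul]
  rw [Finset.sum_comm]
  simp

lemma margY_mapFst (ψ : 𝒳 → 𝒰) (q : 𝒳 × 𝒴 → ℝ) (y : 𝒴) :
    margY (mapFst ψ q) y = margY q y := by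
  simpa [margY] using sum_mapFst_mul ψ q (fun _ => 1) y

lemma condH_mapFst [Fintype 𝒴] (hq : ∀ t, 0 ≤ q t) (ψ : 𝒳 → 𝒰) :
    condH (mapFst ψ q) = ∑ t, q t * -Real.logb 2 (condPmf (mapFst ψ q) (ψ t.1, t.2)) := by
  simp only [condH_eq_sum (mapFst_nonneg hq ψ), Fintype.sum_prod_type_right,
    sum_mapFst_mul ψ q fun u => -Real.logb 2 (condPmf (mapFst ψ q) (u, _))]

lemma condPmf_mapFst_pos_of_iid_ne_zero (hq : ∀ t, 0 ≤ q t) (ψ : 𝒳 → 𝒰) {n : ℕ}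
    {xy : (Fin n → 𝒳) × (Fin n → 𝒴)} (hxy : iid q n xy ≠ 0) (i : Fin n) :
    0 < condPmf (mapFst ψ q) (ψ (xy.1 i), xy.2 i) := by
  have hqi : 0 < q (xy.1 i, xy.2 i) :=
    (hq _).lt_of_ne' (Finset.prod_ne_zero_iff.1 hxy i (Finset.mem_univ i))
  exact condPmf_pos (mapFst_nonneg hq ψ) (hqi.trans_le (le_mapFst hq ψ (xy.1 i, xy.2 i)))

end MapFst

section TypicalLists

variable {𝒳 𝒴 𝒰 : Type} [Fintype 𝒰] {p : 𝒰 × 𝒴 → ℝ}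

/-- The blocks `u` whose conditional probability given the side information `y` is at least
`2 ^ (-n K)`. -/
def condTypical (p : 𝒰 × 𝒴 → ℝ) (K : ℝ) {n : ℕ} (y : Fin n → 𝒴) : Finset (Fin n → 𝒰) :=
  {u | 2 ^ (-(n * K)) ≤ ∏ i, condPmf p (u i, y i)}

lemma card_condTypical_le (hp : ∀ t, 0 ≤ p t) (K : ℝ) {n : ℕ} (y : Fin n → 𝒴) :
    ((condTypical p K y).card : ℝ) ≤ 2 ^ (n * K) := by
  have hmass : ∑ u : Fin n → 𝒰, ∏ i, condPmf p (u i, y i) ≤ 1 := by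
    rw [← Fintype.prod_sum fun i u => condPmf p (u, y i)]
    exact Finset.prod_le_one (fun _ _ => Finset.sum_nonneg fun _ _ => condPmf_nonneg hp _)
      fun i _ => sum_condPmf_le_one p (y i)
  have hlower : (condTypical p K y).card * (2 : ℝ) ^ (-(n * K)) ≤ 1 := by
    rw [← nsmul_eq_mul]
    refine (Finset.card_nsmul_le_sum _ _ _ fun u hu => (Finset.mem_filter.1 hu).2).trans <|
      (Finset.sum_le_univ_sum_of_nonneg fun u => ?_).trans hmass
    exact Finset.prod_nonneg fun _ _ => condPmf_nonneg hp _
  rwa [Real.rpow_neg two_pos.le, ← div_eq_mul_inv, div_le_one (by positivity)] at hlower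

variable [Fintype 𝒳] {q : 𝒳 × 𝒴 → ℝ}

lemma lt_sum_of_notMem_condTypical (hq : ∀ t, 0 ≤ q t) (ψ : 𝒳 → 𝒰) {K : ℝ} {n : ℕ}
    {xy : (Fin n → 𝒳) × (Fin n → 𝒴)} (hxy : iid q n xy ≠ 0)
    (hatyp : (fun i => ψ (xy.1 i)) ∉ condTypical (mapFst ψ q) K xy.2) :
    n * K < ∑ i, -Real.logb 2 (condPmf (mapFst ψ q) (ψ (xy.1 i), xy.2 i)) := by
  have hpos (i : Fin n) : 0 < condPmf (mapFst ψ q) (ψ (xy.1 i), xy.2 i) :=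
    condPmf_mapFst_pos_of_iid_ne_zero hq ψ hxy i
  have hprod : ∏ i, condPmf (mapFst ψ q) (ψ (xy.1 i), xy.2 i) < 2 ^ (-(n * K)) := by
    simpa [condTypical] using hatyp
  rw [Finset.sum_neg_distrib, ← Real.logb_prod _ _ fun i _ => (hpos i).ne', lt_neg]
  exact (Real.logb_lt_iff_lt_rpow one_lt_two (Finset.prod_pos fun i _ => hpos i)).2 hprod

theorem tendsto_prob_notMem_condTypical [Fintype 𝒴] (hq : IsPmf q) (ψ : 𝒳 → 𝒰) {K : ℝ}
    (hK : condH (mapFst ψ q) < K) :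
    Tendsto (fun n : ℕ => prob (iid q n)
      {xy | (fun i => ψ (xy.1 i)) ∉ condTypical (mapFst ψ q) K xy.2}) atTop (𝓝 0) := by
  rw [condH_mapFst hq.1] at hK
  refine squeeze_zero (fun n => prob_nonneg (iid_nonneg hq.1 n) _) (fun n => ?_)
    (tendsto_prob_iid_lt_sum hq _ hK)
  exact prob_mono_of_ne_zero (iid_nonneg hq.1 n) fun xy hxy hatyp =>
    lt_sum_of_notMem_condTypical hq.1 ψ hxy hatyp

end TypicalLists

section RandomBinning

open scoped Finset

variable {A B : Type*} [Fintype A] [Fintype B]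

lemma card_collision_mul_card {a b : A} (hab : b ≠ a) :
    #{F : A → B | F b = F a} * Fintype.card B = Fintype.card (A → B) := by
  let e : {F : A → B // F b = F a} × B ≃ (A → B) :=
    { toFun := fun t => Function.update t.1.1 b t.2
      invFun := fun G => (⟨Function.update G b (G a), by simp [hab.symm]⟩, G b)
      left_inv := fun ⟨⟨F, hF⟩, c⟩ => by simp [hab.symm, ← hF]
      right_inv := fun G => by simp }
  rw [← Fintype.card_congr e, Fintype.card_prod, Fintype.card_subtype]

lemma card_exists_collision_mul_card_le {a : A} {S : Finset A} (ha : a ∉ S) :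
    #{F : A → B | ∃ b ∈ S, F b = F a} * Fintype.card B ≤ #S * Fintype.card (A → B) := by
  have hunion : #{F : A → B | ∃ b ∈ S, F b = F a} ≤ ∑ b ∈ S, #{F : A → B | F b = F a} := by
    refine (Finset.card_le_card fun F hF => ?_).trans Finset.card_biUnion_le
    simpa using hF
  calc #{F : A → B | ∃ b ∈ S, F b = F a} * Fintype.card B
      ≤ ∑ b ∈ S, #{F : A → B | F b = F a} * Fintype.card B := by
        rw [← Finset.sum_mul]
        exact Nat.mul_le_mul_right _ hunion
    _ = #S * Fintype.card (A → B) := Finset.sum_const_nat fun b hb =>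
        card_collision_mul_card (ne_of_mem_of_not_mem hb ha)

/-- The average of the failure probability over all binnings `F : A → B` is at most
`N / card B`, since two distinct points collide under a fraction `1 / card B` of them. -/
theorem exists_prob_collision_le {A B : Type*} {Ω : Type} [Finite A] [Fintype B] [Nonempty B]
    [Fintype Ω] {P : Ω → ℝ} (hP : IsPmf P) {a : Ω → A}
    {S : Ω → Finset A} {N : ℝ} (ha : ∀ ω, a ω ∉ S ω) (hS : ∀ ω, #(S ω) ≤ N) :
    ∃ F : A → B, prob P {ω | ∃ b ∈ S ω, F b = F (a ω)} ≤ N / Fintype.card B := by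
  have := Fintype.ofFinite A
  have hB : (0 : ℝ) < Fintype.card B := mod_cast Fintype.card_pos
  have hcount (ω : Ω) : (#{F : A → B | ∃ b ∈ S ω, F b = F (a ω)} : ℝ) ≤
      Fintype.card (A → B) * (N / Fintype.card B) := by
    rw [mul_div_assoc', le_div_iff₀ hB]
    calc (#{F : A → B | ∃ b ∈ S ω, F b = F (a ω)} : ℝ) * Fintype.card B
        ≤ #(S ω) * Fintype.card (A → B) := mod_cast card_exists_collision_mul_card_le (ha ω)
      _ ≤ Fintype.card (A → B) * N := by
        rw [mul_comm]
        exact mul_le_mul_of_nonneg_left (hS ω) (Nat.cast_nonneg _)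
  have hsum : ∑ F : A → B, prob P {ω | ∃ b ∈ S ω, F b = F (a ω)} ≤
      ∑ _F : A → B, N / Fintype.card B :=
    calc ∑ F : A → B, prob P {ω | ∃ b ∈ S ω, F b = F (a ω)}
        = ∑ ω, P ω * #{F : A → B | ∃ b ∈ S ω, F b = F (a ω)} := by
          simp only [prob, Finset.sum_filter, Set.mem_ofPred_eq]
          rw [Finset.sum_comm]
          refine Finset.sum_congr rfl fun ω _ => ?_
          rw [← Finset.sum_filter, Finset.sum_const, nsmul_eq_mul, mul_comm]
      _ ≤ ∑ ω, P ω * (Fintype.card (A → B) * (N / Fintype.card B)) :=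
          Finset.sum_le_sum fun ω _ => mul_le_mul_of_nonneg_left (hcount ω) (hP.1 ω)
      _ = ∑ _F : A → B, N / Fintype.card B := by
          rw [← Finset.sum_mul, hP.2, one_mul, Finset.sum_const, nsmul_eq_mul, Finset.card_univ]
  obtain ⟨F, -, hF⟩ := Finset.exists_le_of_sum_le Finset.univ_nonempty hsum
  exact ⟨F, hF⟩

end RandomBinning

section OneShotCode

open scoped Finset

variable {A B J : Type} [Nonempty A]

/-- An element of `L` with label `j` under `φ`, arbitrary if there is none. -/
def listDecode (L : Finset A) (φ : A → J) (j : J) : A :=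
  Classical.epsilon fun u => u ∈ L ∧ φ u = j

lemma exists_collision_of_listDecode_ne {L : Finset A} {φ : A → J} {u : A} (hu : u ∈ L)
    (hne : listDecode L φ (φ u) ≠ u) : ∃ v ∈ L, v ≠ u ∧ φ v = φ u :=
  have hspec := Classical.epsilon_spec (p := fun v => v ∈ L ∧ φ v = φ u) ⟨u, hu, rfl⟩
  ⟨_, hspec.1, hne, hspec.2⟩

variable {X Y : Type} [Fintype X] [Fintype Y] [Finite A] [Finite B] [Nonempty B]

/-- One bin index of the pair `(a x, b y)` serves both receivers: each knows one coordinate of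
the pair and decodes the other within its own list. -/
theorem exists_code_of_lists {P : X × Y → ℝ} (hP : IsPmf P) (a : X → A) (b : Y → B)
    {L₁ : Y → Finset A} {L₂ : X → Finset B} {N : ℝ} (hL₁ : ∀ y, #(L₁ y) ≤ N)
    (hL₂ : ∀ x, #(L₂ x) ≤ N) (m : ℕ) [NeZero m] :
    ∃ (f : X × Y → Fin m) (g₁ : Fin m × Y → A) (g₂ : Fin m × X → B),
      prob P {t | g₁ (f t, t.2) ≠ a t.1} ≤ prob P {t | a t.1 ∉ L₁ t.2} + 2 * N / m ∧
      prob P {t | g₂ (f t, t.1) ≠ b t.2} ≤ prob P {t | b t.2 ∉ L₂ t.1} + 2 * N / m := by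
  let S (t : X × Y) : Finset (A × B) :=
    ((L₁ t.2).erase (a t.1)).image (·, b t.2) ∪ ((L₂ t.1).erase (b t.2)).image (a t.1, ·)
  have hmem (t : X × Y) : (a t.1, b t.2) ∉ S t := by simp [S]
  have hcard (t : X × Y) : (#(S t) : ℝ) ≤ 2 * N := by
    have hunion : #(S t) ≤ #(L₁ t.2) + #(L₂ t.1) := (Finset.card_union_le _ _).trans <|
      add_le_add (Finset.card_image_le.trans Finset.card_erase_le)
        (Finset.card_image_le.trans Finset.card_erase_le)
    have : (#(S t) : ℝ) ≤ #(L₁ t.2) + #(L₂ t.1) := mod_cast hunion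
    linarith [hL₁ t.2, hL₂ t.1]
  obtain ⟨F, hF⟩ := exists_prob_collision_le (B := Fin m) hP hmem hcard
  rw [Fintype.card_fin] at hF
  refine ⟨fun t => F (a t.1, b t.2), fun t => listDecode (L₁ t.2) (fun u => F (u, b t.2)) t.1,
    fun t => listDecode (L₂ t.2) (fun v => F (a t.2, v)) t.1, ?_, ?_⟩
  all_goals
    refine le_trans (prob_mono hP.1 fun t ht => ?_) <|
      (prob_union_le hP.1 _ _).trans (add_le_add_right hF _)
    refine or_iff_not_imp_left.2 fun hlist => ?_
    obtain ⟨w, hw, hne, hFw⟩ := exists_collision_of_listDecode_ne (not_not.1 hlist) ht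
  · exact ⟨(w, b t.2), by simp [S, hw, hne], hFw⟩
  · exact ⟨(a t.1, w), by simp [S, hw, hne], hFw⟩

end OneShotCode

section Achievability

lemma sum_mul_frequency_ne_le_prob {Ω 𝒰 : Type} [Fintype Ω] {P : Ω → ℝ} (hP : ∀ ω, 0 ≤ P ω)
    {n : ℕ} (u w : Ω → Fin n → 𝒰) :
    ∑ ω, P ω * ((n : ℝ)⁻¹ * ∑ i, if w ω i = u ω i then (0 : ℝ) else 1) ≤
      prob P {ω | w ω ≠ u ω} := by
  rw [prob_eq_sum_mul_indicator]
  refine Finset.sum_le_sum fun ω _ => mul_le_mul_of_nonneg_left ?_ (hP ω)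
  by_cases hω : w ω = u ω
  · simp [hω]
  · have hsum : ∑ i, (if w ω i = u ω i then (0 : ℝ) else 1) ≤ n :=
      (Finset.sum_le_card_nsmul _ _ 1 fun i _ => by split_ifs <;> norm_num).trans_eq (by simp)
    rw [Set.indicator_of_mem hω, Pi.one_apply, mul_comm, ← div_eq_mul_inv]
    exact div_le_one_of_le₀ hsum (Nat.cast_nonneg n)

lemma tendsto_rpow_div_floor_rpow {K R : ℝ} (hKR : K < R) (hR : 0 ≤ R) :
    Tendsto (fun n : ℕ => (2 : ℝ) ^ (n * K) / ⌊(2 : ℝ) ^ (n * R)⌋₊) atTop (𝓝 0) := by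
  have hgeom : Tendsto (fun n : ℕ => 2 * ((2 : ℝ) ^ (K - R)) ^ n) atTop (𝓝 0) := by
    simpa using (tendsto_pow_atTop_nhds_zero_of_lt_one (by positivity)
      (Real.rpow_lt_one_of_one_lt_of_neg one_lt_two (sub_neg.2 hKR))).const_mul 2
  refine squeeze_zero (fun n => by positivity) (fun n => ?_) hgeom
  have hone : (1 : ℝ) ≤ 2 ^ (n * R) := Real.one_le_rpow one_le_two (by positivity)
  calc (2 : ℝ) ^ (n * K) / ⌊(2 : ℝ) ^ (n * R)⌋₊
      ≤ 2 ^ (n * K) / (2 ^ (n * R) / 2) :=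
        div_le_div_of_nonneg_left (by positivity) (by positivity) (Nat.div_two_lt_floor hone).le
    _ = 2 * (2 ^ (K - R)) ^ n := by
        rw [← Real.rpow_mul_natCast two_pos.le, sub_mul, Real.rpow_sub two_pos, mul_comm K,
          mul_comm R]
        field_simp

variable {𝒳 𝒴 𝒰 𝒱 : Type} [Fintype 𝒳] [Fintype 𝒴] [Fintype 𝒰] [Fintype 𝒱]
variable {q : 𝒳 × 𝒴 → ℝ} {ψx : 𝒳 → 𝒰} {ψy : 𝒴 → 𝒱} {K R ε : ℝ}

theorem eventually_exists_code (hq : IsPmf q) (hx : condH (mapFst ψx q) < K)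
    (hy : condH (mapFst ψy (swap q)) < K) (hKR : K < R) (hR : 0 ≤ R) (hε : 0 < ε) :
    ∀ᶠ n : ℕ in atTop, ∃ (f : (Fin n → 𝒳) × (Fin n → 𝒴) → Fin ⌊(2 : ℝ) ^ (n * R)⌋₊)
      (g1 : Fin ⌊(2 : ℝ) ^ (n * R)⌋₊ × (Fin n → 𝒴) → Fin n → 𝒰)
      (g2 : Fin ⌊(2 : ℝ) ^ (n * R)⌋₊ × (Fin n → 𝒳) → Fin n → 𝒱),
      Delta1 q (fun x u => if u = ψx x then (0 : ℝ) else 1) f g1 ≤ ε ∧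
        Delta2 q (fun y v => if v = ψy y then (0 : ℝ) else 1) f g2 ≤ ε := by
  have hatyp₁ := (tendsto_prob_notMem_condTypical hq ψx hx).eventually_le_const (half_pos hε)
  have hatyp₂ := (tendsto_prob_notMem_condTypical hq.swap ψy hy).eventually_le_const (half_pos hε)
  have hcollide := ((tendsto_rpow_div_floor_rpow hKR hR).const_mul 2).eventually_le_const
    (u := ε / 2) (by simpa using hε)
  filter_upwards [hatyp₁, hatyp₂, hcollide] with n h₁ h₂ hm
  have : NeZero ⌊(2 : ℝ) ^ (n * R)⌋₊ :=
    ⟨(Nat.floor_pos.2 (Real.one_le_rpow one_le_two (by positivity))).ne'⟩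
  obtain ⟨x, y⟩ := hq.nonempty.some
  have : Nonempty 𝒰 := ⟨ψx x⟩
  have : Nonempty 𝒱 := ⟨ψy y⟩
  obtain ⟨f, g1, g2, hg1, hg2⟩ := exists_code_of_lists (hq.iid n)
    (fun x i => ψx (x i)) (fun y i => ψy (y i))
    (card_condTypical_le (mapFst_nonneg hq.1 ψx) K)
    (card_condTypical_le (mapFst_nonneg hq.swap.1 ψy) K) ⌊(2 : ℝ) ^ (n * R)⌋₊
  rw [← mul_div_assoc] at hm
  refine ⟨f, g1, g2, ?_, ?_⟩
  · exact (sum_mul_frequency_ne_le_prob (hq.iid n).1 _ _).trans (hg1.trans (by linarith))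
  · replace h₂ := (prob_iid_swap q n
      {xy | (fun i => ψy (xy.2 i)) ∉ condTypical (mapFst ψy (swap q)) K xy.1}).symm.trans_le h₂
    exact (sum_mul_frequency_ne_le_prob (hq.iid n).1 _ _).trans (hg2.trans (by linarith))

theorem rdAchievable_of_condH_le (hq : IsPmf q) (hx : condH (mapFst ψx q) ≤ R)
    (hy : condH (mapFst ψy (swap q)) ≤ R) :
    RDAchievable q (fun x u => if u = ψx x then (0 : ℝ) else 1)
      (fun y v => if v = ψy y then (0 : ℝ) else 1) 0 0 R := by
  intro ε hε
  have hR : 0 ≤ R := (condH_nonneg (mapFst_nonneg hq.1 ψx)).trans hx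
  have hcode := eventually_exists_code (K := R + ε / 2) (R := R + ε) hq
    (hx.trans_lt (by linarith)) (hy.trans_lt (by linarith)) (by linarith) (by linarith) hε
  obtain ⟨n, ⟨f, g1, g2, hΔ1, hΔ2⟩, hn⟩ := (hcode.and (eventually_gt_atTop 0)).exists
  refine ⟨n, _, f, g1, g2, hn, ?_, by rwa [zero_add], by rwa [zero_add]⟩
  have hone : (1 : ℝ) ≤ 2 ^ (n * (R + ε)) := Real.one_le_rpow one_le_two (by positivity)
  rw [div_le_iff₀' (mod_cast hn)]
  refine (Real.logb_le_iff_le_rpow one_lt_two ?_).2 (Nat.floor_le (by positivity))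
  exact mod_cast Nat.floor_pos.2 hone

end Achievability

section Converse

lemma sum_mul_logb_le_logb {α : Type} [Fintype α] {p ρ : α → ℝ} (hp : IsPmf p)
    (hρ : ∀ a, p a ≠ 0 → 0 < ρ a) {M : ℝ} (hM : 0 < M) (hle : ∑ a, p a * ρ a ≤ M) :
    ∑ a, p a * Real.logb 2 (ρ a) ≤ Real.logb 2 M := by
  have hterm (a : α) : p a * (Real.log (ρ a) - Real.log M) ≤ p a * ρ a / M - p a := by
    by_cases ha : p a = 0
    · simp [ha]
    · rw [← Real.log_div (hρ a ha).ne' hM.ne', mul_div_assoc, ← mul_sub_one]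
      exact mul_le_mul_of_nonneg_left (Real.log_le_sub_one_of_pos (div_pos (hρ a ha) hM)) (hp.1 a)
  have hlog : ∑ a, p a * Real.log (ρ a) ≤ Real.log M := by
    rw [← sub_nonpos]
    calc ∑ a, p a * Real.log (ρ a) - Real.log M
        = ∑ a, p a * (Real.log (ρ a) - Real.log M) := by
          simp only [mul_sub, Finset.sum_sub_distrib, ← Finset.sum_mul, hp.2, one_mul]
      _ ≤ ∑ a, (p a * ρ a / M - p a) := Finset.sum_le_sum fun a _ => hterm a
      _ = (∑ a, p a * ρ a) / M - 1 := by rw [Finset.sum_sub_distrib, Finset.sum_div, hp.2]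
      _ ≤ 0 := sub_nonpos.2 ((div_le_one hM).2 hle)
  simp only [Real.logb, mul_div_assoc', ← Finset.sum_div]
  gcongr

section NoisyCopy

variable {𝒰 : Type} [Fintype 𝒰] {η : ℝ}

/-- The law of a symbol that equals `w` with probability `1 - η` and is uniform otherwise; as a
test distribution it has full support, so a wrong guess `w` costs only finitely many bits. -/
def noisyCopy (η : ℝ) (w u : 𝒰) : ℝ :=
  (if w = u then 1 - η else 0) + η / Fintype.card 𝒰

lemma sum_noisyCopy [Nonempty 𝒰] (η : ℝ) (w : 𝒰) : ∑ u, noisyCopy η w u = 1 := by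
  simp [noisyCopy, Finset.sum_add_distrib, mul_div_cancel₀]

lemma noisyCopy_pos [Nonempty 𝒰] (hη₀ : 0 < η) (hη₁ : η < 1) (w u : 𝒰) :
    0 < noisyCopy η w u := by
  have hite : 0 ≤ if w = u then 1 - η else 0 := by split_ifs <;> linarith
  exact add_pos_of_nonneg_of_pos hite (div_pos hη₀ (mod_cast Fintype.card_pos))

lemma le_logb_noisyCopy [Nonempty 𝒰] (hη₀ : 0 < η) (hη₁ : η < 1) (w u : 𝒰) :
    Real.logb 2 (1 - η) - (if w = u then 0 else 1) * Real.logb 2 (Fintype.card 𝒰 / η) ≤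
      Real.logb 2 (noisyCopy η w u) := by
  have hcard : (0 : ℝ) < η / Fintype.card 𝒰 := div_pos hη₀ (mod_cast Fintype.card_pos)
  rw [noisyCopy]
  split_ifs
  · rw [zero_mul, sub_zero]
    exact Real.logb_le_logb_of_le one_lt_two (by linarith) (by linarith)
  · rw [one_mul, zero_add, ← inv_div, Real.logb_inv, sub_neg_eq_add, add_le_iff_nonpos_left]
    exact Real.logb_nonpos one_lt_two (by linarith) (by linarith)

end NoisyCopy

variable {𝒳 𝒴 𝒰 : Type} [Fintype 𝒳] [Fintype 𝒴] [Fintype 𝒰] {q : 𝒳 × 𝒴 → ℝ}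

lemma sum_prod_margY (hq : IsPmf q) (n : ℕ) : ∑ y : Fin n → 𝒴, ∏ i, margY q (y i) = 1 := by
  rw [← Fintype.prod_sum fun (_ : Fin n) y => margY q y]
  have hmarg : ∑ y, margY q y = 1 := by rw [← hq.2, Fintype.sum_prod_type_right]; rfl
  simp [hmarg]

lemma sum_iid_mul_prod_div_condPmf_le_one (hq : IsPmf q) (ψ : 𝒳 → 𝒰) {n : ℕ}
    {w : (Fin n → 𝒴) → Fin n → 𝒰 → ℝ} (hw : ∀ y i u, 0 ≤ w y i u)
    (hw_sum : ∀ y i, ∑ u, w y i u ≤ 1) :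
    ∑ xy, iid q n xy * ∏ i, w xy.2 i (ψ (xy.1 i)) / condPmf (mapFst ψ q) (ψ (xy.1 i), xy.2 i) ≤
      1 := by
  have hmap := mapFst_nonneg hq.1 ψ
  rw [Fintype.sum_prod_type_right, ← sum_prod_margY hq n]
  refine Finset.sum_le_sum fun y _ => ?_
  calc ∑ x : Fin n → 𝒳, iid q n (x, y) * ∏ i, w y i (ψ (x i)) / condPmf (mapFst ψ q) (ψ (x i), y i)
      = ∏ i, ∑ x, q (x, y i) * (w y i (ψ x) / condPmf (mapFst ψ q) (ψ x, y i)) := by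
        simp only [Fintype.prod_sum, Finset.prod_mul_distrib, iid]
    _ ≤ ∏ i, margY q (y i) := by
        refine Finset.prod_le_prod (fun i _ => Finset.sum_nonneg fun x _ => mul_nonneg (hq.1 _) <|
          div_nonneg (hw y i _) (condPmf_nonneg hmap _)) fun i _ => ?_
        rw [← sum_mapFst_mul ψ q fun u => w y i u / condPmf (mapFst ψ q) (u, y i)]
        refine (sum_mul_div_condPmf_le hmap (hw y i) (y i)).trans ?_
        rw [margY_mapFst]
        exact mul_le_of_le_one_right (margY_nonneg hq.1 _) (hw_sum y i)

/-- With `m` messages the decoder output is one of `m` functions of the side information. -/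
lemma sum_iid_mul_prod_noisyCopy_div_le (hq : IsPmf q) (ψ : 𝒳 → 𝒰) {η : ℝ} (hη₀ : 0 < η)
    (hη₁ : η < 1) {n m : ℕ} (f : (Fin n → 𝒳) × (Fin n → 𝒴) → Fin m)
    (g : Fin m × (Fin n → 𝒴) → Fin n → 𝒰) :
    ∑ xy, iid q n xy * ∏ i, noisyCopy η (g (f xy, xy.2) i) (ψ (xy.1 i)) /
      condPmf (mapFst ψ q) (ψ (xy.1 i), xy.2 i) ≤ m := by
  have : Nonempty 𝒰 := hq.nonempty.map fun t => ψ t.1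
  let ρ (j : Fin m) (xy : (Fin n → 𝒳) × (Fin n → 𝒴)) : ℝ :=
    ∏ i, noisyCopy η (g (j, xy.2) i) (ψ (xy.1 i)) / condPmf (mapFst ψ q) (ψ (xy.1 i), xy.2 i)
  have hρ (j : Fin m) (xy) : 0 ≤ ρ j xy := Finset.prod_nonneg fun i _ =>
    div_nonneg (noisyCopy_pos hη₀ hη₁ _ _).le (condPmf_nonneg (mapFst_nonneg hq.1 ψ) _)
  calc ∑ xy, iid q n xy * ρ (f xy) xy
      ≤ ∑ xy, ∑ j, iid q n xy * ρ j xy := Finset.sum_le_sum fun xy _ =>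
        Finset.single_le_sum (f := fun j => iid q n xy * ρ j xy)
          (fun j _ => mul_nonneg (iid_nonneg hq.1 n xy) (hρ j xy)) (Finset.mem_univ (f xy))
    _ = ∑ j, ∑ xy, iid q n xy * ρ j xy := Finset.sum_comm
    _ ≤ ∑ _j : Fin m, 1 := Finset.sum_le_sum fun j _ =>
        sum_iid_mul_prod_div_condPmf_le_one hq ψ (w := fun y i => noisyCopy η (g (j, y) i))
          (fun _ _ _ => (noisyCopy_pos hη₀ hη₁ _ _).le) fun _ _ => (sum_noisyCopy η _).le
    _ = m := by simp

lemma le_logb_prod_noisyCopy_div (hq : IsPmf q) (ψ : 𝒳 → 𝒰) {η : ℝ} (hη₀ : 0 < η) (hη₁ : η < 1)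
    {n : ℕ} {xy : (Fin n → 𝒳) × (Fin n → 𝒴)} (hxy : iid q n xy ≠ 0) (w : Fin n → 𝒰) :
    n * Real.logb 2 (1 - η) -
        (∑ i, if w i = ψ (xy.1 i) then (0 : ℝ) else 1) * Real.logb 2 (Fintype.card 𝒰 / η) +
        ∑ i, -Real.logb 2 (condPmf (mapFst ψ q) (ψ (xy.1 i), xy.2 i)) ≤
      Real.logb 2 (∏ i, noisyCopy η (w i) (ψ (xy.1 i)) /
        condPmf (mapFst ψ q) (ψ (xy.1 i), xy.2 i)) := by
  have : Nonempty 𝒰 := hq.nonempty.map fun t => ψ t.1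
  have hnoisy (i : Fin n) : noisyCopy η (w i) (ψ (xy.1 i)) ≠ 0 := (noisyCopy_pos hη₀ hη₁ _ _).ne'
  have hcond (i : Fin n) : condPmf (mapFst ψ q) (ψ (xy.1 i), xy.2 i) ≠ 0 :=
    (condPmf_mapFst_pos_of_iid_ne_zero hq.1 ψ hxy i).ne'
  have hconst : n * Real.logb 2 (1 - η) = ∑ _i : Fin n, Real.logb 2 (1 - η) := by simp
  rw [Real.logb_prod _ _ fun i _ => div_ne_zero (hnoisy i) (hcond i), hconst, Finset.sum_mul,
    ← Finset.sum_sub_distrib, ← Finset.sum_add_distrib]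
  refine Finset.sum_le_sum fun i _ => ?_
  rw [Real.logb_div (hnoisy i) (hcond i), sub_eq_add_neg (Real.logb 2 (noisyCopy _ _ _))]
  exact add_le_add_left (le_logb_noisyCopy hη₀ hη₁ _ _) _

theorem condH_le_of_code (hq : IsPmf q) (ψ : 𝒳 → 𝒰) {η : ℝ} (hη₀ : 0 < η) (hη₁ : η < 1)
    {n m : ℕ} (hn : 0 < n) (f : (Fin n → 𝒳) × (Fin n → 𝒴) → Fin m)
    (g : Fin m × (Fin n → 𝒴) → Fin n → 𝒰) :
    condH (mapFst ψ q) ≤ Real.logb 2 m / n - Real.logb 2 (1 - η) +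
      Delta1 q (fun x u => if u = ψ x then (0 : ℝ) else 1) f g *
        Real.logb 2 (Fintype.card 𝒰 / η) := by
  have : Nonempty 𝒰 := hq.nonempty.map fun t => ψ t.1
  have hm : (0 : ℝ) < m := mod_cast (hq.iid n).nonempty.elim fun xy => (f xy).pos
  have hn' : (0 : ℝ) < n := mod_cast hn
  set L := Real.logb 2 (Fintype.card 𝒰 / η)
  set D := Delta1 q (fun x u => if u = ψ x then (0 : ℝ) else 1) f g with hD
  let err (xy : (Fin n → 𝒳) × (Fin n → 𝒴)) : ℝ :=
    ∑ i, if g (f xy, xy.2) i = ψ (xy.1 i) then (0 : ℝ) else 1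
  let info (xy : (Fin n → 𝒳) × (Fin n → 𝒴)) : ℝ :=
    ∑ i, -Real.logb 2 (condPmf (mapFst ψ q) (ψ (xy.1 i), xy.2 i))
  have herr : ∑ xy, iid q n xy * err xy = n * D := by
    simp only [hD, Delta1, mul_left_comm _ (n : ℝ)⁻¹, ← Finset.mul_sum]
    exact (inv_mul_cancel_left₀ hn'.ne' _).symm
  have hinfo : ∑ xy, iid q n xy * info xy = n * condH (mapFst ψ q) := by
    rw [condH_mapFst hq.1, ← sum_iid_mul_sum_apply hq]
  have hgibbs : ∑ xy, iid q n xy * (n * Real.logb 2 (1 - η) - err xy * L + info xy) ≤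
      Real.logb 2 m := by
    refine le_trans (Finset.sum_le_sum fun xy _ => ?_) <| sum_mul_logb_le_logb (hq.iid n)
      (fun xy hxy => Finset.prod_pos fun i _ => div_pos (noisyCopy_pos hη₀ hη₁ _ _)
        (condPmf_mapFst_pos_of_iid_ne_zero hq.1 ψ hxy i))
      hm (sum_iid_mul_prod_noisyCopy_div_le hq ψ hη₀ hη₁ f g)
    by_cases hxy : iid q n xy = 0
    · simp [hxy]
    · exact mul_le_mul_of_nonneg_left (le_logb_prod_noisyCopy_div hq ψ hη₀ hη₁ hxy _)
        (iid_nonneg hq.1 n xy)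
  simp only [mul_add, mul_sub, ← mul_assoc, Finset.sum_add_distrib, Finset.sum_sub_distrib,
    ← Finset.sum_mul, (hq.iid n).2, herr, hinfo, one_mul] at hgibbs
  have hrate : n * (Real.logb 2 m / n) = Real.logb 2 m := mul_div_cancel₀ _ hn'.ne'
  refine le_of_mul_le_mul_left ?_ hn'
  linarith

lemma tendsto_fano_bound (r : ℝ) {c : ℝ} (hc : 0 < c) :
    Tendsto (fun ε => r + ε - Real.logb 2 (1 - ε) + ε * Real.logb 2 (c / ε)) (𝓝[>] 0) (𝓝 r) := by
  have hlog : Tendsto (fun ε => Real.logb 2 (1 - ε)) (𝓝 0) (𝓝 (Real.logb 2 (1 - 0))) :=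
    (Real.continuousAt_logb (by norm_num)).tendsto.comp (tendsto_const_nhds.sub tendsto_id)
  have hmul : Tendsto (fun ε => ε * Real.logb 2 c - ε * Real.log ε / Real.log 2) (𝓝 0)
      (𝓝 (0 * Real.logb 2 c - 0 * Real.log 0 / Real.log 2)) :=
    ((continuous_id.mul continuous_const).sub (Real.continuous_mul_log.div_const _)).tendsto 0
  have hsum := ((tendsto_const_nhds (x := r)).add tendsto_id).sub hlog |>.add hmul
  simp only [id, add_zero, sub_zero, Real.logb_one, zero_mul, zero_div] at hsum
  refine (hsum.mono_left nhdsWithin_le_nhds).congr' ?_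
  filter_upwards [self_mem_nhdsWithin] with ε (hε : 0 < ε)
  rw [Real.logb_div hc.ne' hε.ne', mul_sub, mul_div_assoc, Real.log_div_log]

theorem condH_le_of_forall_exists_code (hq : IsPmf q) (ψ : 𝒳 → 𝒰) {r : ℝ}
    (hr : ∀ ε > (0 : ℝ), ∃ (n m : ℕ) (f : (Fin n → 𝒳) × (Fin n → 𝒴) → Fin m)
      (g : Fin m × (Fin n → 𝒴) → Fin n → 𝒰), 0 < n ∧ Real.logb 2 m / n ≤ r + ε ∧
        Delta1 q (fun x u => if u = ψ x then (0 : ℝ) else 1) f g ≤ ε) :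
    condH (mapFst ψ q) ≤ r := by
  have : Nonempty 𝒰 := hq.nonempty.map fun t => ψ t.1
  have hcard : (1 : ℝ) ≤ Fintype.card 𝒰 := mod_cast Fintype.card_pos
  refine ge_of_tendsto (tendsto_fano_bound r (zero_lt_one.trans_le hcard)) ?_
  filter_upwards [Ioo_mem_nhdsGT one_pos] with ε ⟨hε₀, hε₁⟩
  obtain ⟨n, m, f, g, hn, hrate, hΔ⟩ := hr ε hε₀
  have hlog : 0 ≤ Real.logb 2 (Fintype.card 𝒰 / ε) :=
    Real.logb_nonneg one_lt_two ((one_le_div hε₀).2 (hε₁.le.trans hcard))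
  calc condH (mapFst ψ q) ≤ _ := condH_le_of_code hq ψ hε₀ hε₁ hn f g
    _ ≤ r + ε - Real.logb 2 (1 - ε) + ε * Real.logb 2 (Fintype.card 𝒰 / ε) := by gcongr

variable {𝒱 : Type} [Fintype 𝒱] {ψx : 𝒳 → 𝒰} {ψy : 𝒴 → 𝒱} {r : ℝ}

theorem condH_le_of_rdAchievable (hq : IsPmf q)
    (hr : RDAchievable q (fun x u => if u = ψx x then (0 : ℝ) else 1)
      (fun y v => if v = ψy y then (0 : ℝ) else 1) 0 0 r) :
    condH (mapFst ψx q) ≤ r ∧ condH (mapFst ψy (swap q)) ≤ r := by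
  refine ⟨condH_le_of_forall_exists_code hq ψx fun ε hε => ?_,
    condH_le_of_forall_exists_code hq.swap ψy fun ε hε => ?_⟩ <;>
  obtain ⟨n, m, f, g1, g2, hn, hrate, hΔ1, hΔ2⟩ := hr ε hε
  · exact ⟨n, m, f, g1, hn, hrate, by rwa [zero_add] at hΔ1⟩
  · rw [delta2_eq_delta1_swap, zero_add] at hΔ2
    exact ⟨n, m, f ∘ Prod.swap, g2, hn, hrate, hΔ2⟩

end Converse

end TWR

open TWR in
/-- Corollary 2: for deterministic reconstruction targets
`U = ψx(X)`, `V = ψy(Y)` with the associated 0/1 distortion measures,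
`R(0,0) = max{H(U|Y), H(V|X)}`. -/
theorem rd_two_deterministic
    {𝒳 𝒴 𝒰 𝒱 : Type} [Fintype 𝒳] [Fintype 𝒴] [Fintype 𝒰] [Fintype 𝒱]
    (q : 𝒳 × 𝒴 → ℝ) (hq : IsPmf q) (ψx : 𝒳 → 𝒰) (ψy : 𝒴 → 𝒱) :
    RD q (fun x u => if u = ψx x then (0 : ℝ) else 1)
        (fun y v => if v = ψy y then (0 : ℝ) else 1) 0 0 =
      max (condH (fun t : 𝒰 × 𝒴 => ∑ x, if ψx x = t.1 then q (x, t.2) else 0))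
          (condH (fun t : 𝒱 × 𝒳 => ∑ y, if ψy y = t.1 then q (t.2, y) else 0)) := by
  have hachievable := rdAchievable_of_condH_le hq
    (le_max_left (condH (mapFst ψx q)) (condH (mapFst ψy (swap q)))) (le_max_right _ _)
  have hnonneg : 0 ≤ max (condH (mapFst ψx q)) (condH (mapFst ψy (swap q))) :=
    le_max_of_le_left (condH_nonneg (mapFst_nonneg hq.1 ψx))
  refine le_antisymm (csInf_le ⟨0, fun r hr => hr.1⟩ ⟨hnonneg, hachievable⟩)
    (le_csInf ⟨_, hnonneg, hachievable⟩ fun r hr => ?_)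
  exact max_le_iff.2 (condH_le_of_rdAchievable hq hr.2)
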